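/- Let V be a finite-dimensional real vector space with an increasing filtration W by subspaces such that W_rV = 0 for r sufficiently small and W_rV = V for r sufficiently large, and let β : V → V⊗ℝ[x] be an ℝ-linear map with β(W_rV) ⊆ (W_{r−1}V)⊗ℝ[x] for all r. Define D : V⊗ℝ[x] → V⊗ℝ[x] by D(v⊗f) = v⊗(df/dx) + β(v)·f, and let D_ℂ be its complexification acting on V_ℂ⊗ℂ[x]. Then for every λ ∈ ℂ the evaluation map ev_λ : ker(D_ℂ) → V_ℂ, f ↦ f(λ), is a ℂ-linear isomorphism. In particular, for every v ∈ V there is a unique f ∈ V⊗ℝ[x] with D(f) = 0 and f(0) = v (the element exp(−∫_0^x β) applied to v). -/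

import Mathlib

/-!
Write `B` for the operator `u ⊗ f ↦ β u · f`, so that `D = d/dx + B`, and let `I` be the
antiderivative `f ↦ ∫_lam^x f`. Since `(I f)' = f`, `(I f)(lam) = 0` and `I (f') = f - f(lam)`,
the problem `D f = 0`, `f(lam) = u` is equivalent to the integral equation `(1 + I B) f = u`,
with `u` regarded as a constant polynomial (`deriv_eq_iff_integral_eq`). The operator `I`
preserves each `W r ⊗ k[x]` and `B` maps it into `W (r - 1) ⊗ k[x]`; as the filtration is
bounded, `I B` is nilpotent (`isNilpotent_integral`) and `1 + I B` is invertible. Hence there is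
exactly one solution for each `u` (`existsUnique_solution`).

The argument works over any field of characteristic zero. It is applied over `ℂ` to the base
change of the filtration, which `β_ℂ` again strictly lowers (`betaC_mem`), and over `ℝ` with
`lam = 0`.
-/

/-!
# STATEMENT 3

For a finite-dimensional real vector space `V` with a bounded increasing filtration `W`
and an `ℝ`-linear `β : V → V ⊗ ℝ[x]` with `β (W r) ⊆ W (r-1) ⊗ ℝ[x]`, the operator
`D (v ⊗ f) = v ⊗ f' + β v · f` on `V ⊗ ℝ[x]` has a complexification `D_ℂ` acting on
`V_ℂ ⊗ ℂ[x]`, and for every `λ ∈ ℂ` the evaluation map `ev_λ : ker D_ℂ → V_ℂ` is a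
`ℂ`-linear isomorphism; moreover every `v ∈ V` is the value at `0` of a unique real
polynomial solution of `D f = 0`.

We identify `U ⊗ k[x]` with finitely supported sequences `ℕ →₀ U` of coefficients,
and the complexification `V_ℂ` with `ℂ ⊗[ℝ] V`.
-/

noncomputable section

open Finsupp TensorProduct

variable {V : Type} [AddCommGroup V] [Module ℝ V]

/-- Multiplication by `x ^ k` on `U ⊗ k[x] = ℕ →₀ U`. -/
def shiftMap (k : Type) [CommSemiring k] (U : Type) [AddCommGroup U] [Module k U]
    (m : ℕ) : (ℕ →₀ U) →ₗ[k] (ℕ →₀ U) :=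
  Finsupp.lsum k fun n => Finsupp.lsingle (n + m)

/-- Differentiation `d/dx` on `U ⊗ k[x] = ℕ →₀ U`. -/
def derivMap (k : Type) [Field k] (U : Type) [AddCommGroup U] [Module k U] :
    (ℕ →₀ U) →ₗ[k] (ℕ →₀ U) :=
  Finsupp.lsum k fun n => (n : k) • Finsupp.lsingle (n - 1)

/-- The operator `D` of the statement on `V ⊗ ℝ[x]`. -/
def twistedD (β : V →ₗ[ℝ] (ℕ →₀ V)) : (ℕ →₀ V) →ₗ[ℝ] (ℕ →₀ V) :=
  derivMap ℝ V + Finsupp.lsum ℝ fun n => (shiftMap ℝ V n) ∘ₗ β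

/-- The canonical map `V → ℂ ⊗[ℝ] V`, `v ↦ 1 ⊗ v`. -/
def toC : V →ₗ[ℝ] (ℂ ⊗[ℝ] V) := TensorProduct.mk ℝ ℂ V 1

/-- Coefficientwise complexification `V ⊗ ℝ[x] → V_ℂ ⊗ ℂ[x]`. -/
def iotaP : (ℕ →₀ V) →ₗ[ℝ] (ℕ →₀ (ℂ ⊗[ℝ] V)) :=
  Finsupp.mapRange.linearMap toC

/-- The complexification `β_ℂ : V_ℂ → V_ℂ ⊗ ℂ[x]` of `β`. -/
def betaC (β : V →ₗ[ℝ] (ℕ →₀ V)) : (ℂ ⊗[ℝ] V) →ₗ[ℂ] (ℕ →₀ (ℂ ⊗[ℝ] V)) :=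
  LinearMap.liftBaseChange ℂ (iotaP ∘ₗ β)

/-- The complexification `D_ℂ` of `D`, acting on `V_ℂ ⊗ ℂ[x]`. -/
def twistedDC (β : V →ₗ[ℝ] (ℕ →₀ V)) :
    (ℕ →₀ (ℂ ⊗[ℝ] V)) →ₗ[ℂ] (ℕ →₀ (ℂ ⊗[ℝ] V)) :=
  derivMap ℂ (ℂ ⊗[ℝ] V) + Finsupp.lsum ℂ fun n => (shiftMap ℂ (ℂ ⊗[ℝ] V) n) ∘ₗ (betaC β)

/-- Evaluation of a polynomial with coefficients in `V_ℂ` at `λ ∈ ℂ`. -/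
def evMap (lam : ℂ) : (ℕ →₀ (ℂ ⊗[ℝ] V)) →ₗ[ℂ] (ℂ ⊗[ℝ] V) :=
  Finsupp.lsum ℂ fun n => (lam ^ n) • LinearMap.id

/-- Evaluation at `lam` on `U ⊗ k[x] = ℕ →₀ U`, over an arbitrary field `k`. -/
def evalMap (k : Type) [Field k] (U : Type) [AddCommGroup U] [Module k U] (lam : k) :
    (ℕ →₀ U) →ₗ[k] U :=
  Finsupp.lsum k fun n => (lam ^ n) • LinearMap.id

/-- The operator `B : u ⊗ f ↦ β u · f` on `U ⊗ k[x]`. -/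
def mulMap (k : Type) [Field k] (U : Type) [AddCommGroup U] [Module k U]
    (β : U →ₗ[k] (ℕ →₀ U)) : (ℕ →₀ U) →ₗ[k] (ℕ →₀ U) :=
  Finsupp.lsum k fun n => (shiftMap k U n) ∘ₗ β

/-- The antiderivative on `U ⊗ k[x]` with zero constant term. -/
def antiderivMap (k : Type) [Field k] (U : Type) [AddCommGroup U] [Module k U] :
    (ℕ →₀ U) →ₗ[k] (ℕ →₀ U) :=
  Finsupp.lsum k fun n => ((n : k) + 1)⁻¹ • Finsupp.lsingle (n + 1)

/-- The antiderivative `f ↦ ∫_lam^x f` on `U ⊗ k[x]`, normalized to vanish at `lam`. -/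
def integralFrom (k : Type) [Field k] (U : Type) [AddCommGroup U] [Module k U] (lam : k) :
    (ℕ →₀ U) →ₗ[k] (ℕ →₀ U) :=
  antiderivMap k U - Finsupp.lsingle 0 ∘ₗ evalMap k U lam ∘ₗ antiderivMap k U

section General

variable {k : Type} [Field k] {U : Type} [AddCommGroup U] [Module k U]

lemma derivMap_single (n : ℕ) (u : U) :
    derivMap k U (single n u) = single (n - 1) ((n : k) • u) := by
  simp [derivMap]

lemma evalMap_single (lam : k) (n : ℕ) (u : U) :
    evalMap k U lam (single n u) = lam ^ n • u := by
  simp [evalMap]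

lemma antiderivMap_single (n : ℕ) (u : U) :
    antiderivMap k U (single n u) = single (n + 1) (((n : k) + 1)⁻¹ • u) := by
  simp [antiderivMap]

lemma shiftMap_single (m n : ℕ) (u : U) :
    shiftMap k U m (single n u) = single (n + m) u := by
  simp [shiftMap]

lemma mulMap_single (β : U →ₗ[k] (ℕ →₀ U)) (n : ℕ) (u : U) :
    mulMap k U β (single n u) = shiftMap k U n (β u) := by
  simp [mulMap]

lemma evalMap_integralFrom (lam : k) (f : ℕ →₀ U) :
    evalMap k U lam (integralFrom k U lam f) = 0 := by
  simp [integralFrom, evalMap_single]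

lemma derivMap_integralFrom [CharZero k] (lam : k) (f : ℕ →₀ U) :
    derivMap k U (integralFrom k U lam f) = f := by
  have h : derivMap k U ∘ₗ integralFrom k U lam = LinearMap.id := by
    refine Finsupp.lhom_ext fun n u => ?_
    have hn : (n : k) + 1 ≠ 0 := Nat.cast_add_one_ne_zero n
    simp [integralFrom, antiderivMap_single, derivMap_single, smul_smul, hn]
  exact LinearMap.congr_fun h f

/-- The fundamental theorem of calculus for polynomials: `∫_lam^x f' = f - f(lam)`. -/
lemma integralFrom_derivMap [CharZero k] (lam : k) (f : ℕ →₀ U) :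
    integralFrom k U lam (derivMap k U f) = f - single 0 (evalMap k U lam f) := by
  have h : integralFrom k U lam ∘ₗ derivMap k U =
      LinearMap.id - Finsupp.lsingle 0 ∘ₗ evalMap k U lam := by
    refine Finsupp.lhom_ext fun n u => ?_
    rcases n with _ | n
    · simp [integralFrom, derivMap_single, evalMap_single]
    · have hn : (n : k) + 1 ≠ 0 := Nat.cast_add_one_ne_zero n
      simp [integralFrom, antiderivMap_single, derivMap_single, evalMap_single, smul_smul, hn]
  exact LinearMap.congr_fun h f

/-- The differential equation with prescribed value at `lam` is equivalent to the integral
equation `f + ∫_lam^x β · f = u`. -/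
lemma deriv_eq_iff_integral_eq [CharZero k] (β : U →ₗ[k] (ℕ →₀ U)) (lam : k) (u : U)
    (f : ℕ →₀ U) :
    ((derivMap k U + mulMap k U β) f = 0 ∧ evalMap k U lam f = u) ↔
      (1 + integralFrom k U lam ∘ₗ mulMap k U β) f = single 0 u := by
  simp only [LinearMap.add_apply, Module.End.one_apply, LinearMap.comp_apply]
  constructor
  · rintro ⟨hD, rfl⟩
    have h := congrArg (integralFrom k U lam) hD
    rw [map_add, integralFrom_derivMap, map_zero] at h
    rw [← sub_eq_zero, ← h]
    abel
  · intro h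
    constructor
    · have h' := congrArg (derivMap k U) h
      simpa [derivMap_integralFrom, derivMap_single] using h'
    · have h' := congrArg (evalMap k U lam) h
      simpa [evalMap_integralFrom, evalMap_single] using h'

/-- The submodule `S ⊗ k[x]` of `U ⊗ k[x]`. -/
def polySub (S : Submodule k U) : Submodule k (ℕ →₀ U) where
  carrier := {f | ∀ n, f n ∈ S}
  add_mem' hf hg n := S.add_mem (hf n) (hg n)
  zero_mem' _ := S.zero_mem
  smul_mem' c _ hf n := S.smul_mem c (hf n)

lemma mem_polySub {S : Submodule k U} {f : ℕ →₀ U} : f ∈ polySub S ↔ ∀ n, f n ∈ S := Iff.rfl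

lemma single_mem_polySub {S : Submodule k U} {u : U} (hu : u ∈ S) (n : ℕ) :
    single n u ∈ polySub S := by
  intro m
  rw [Finsupp.single_apply]
  split_ifs
  exacts [hu, S.zero_mem]

/-- A linear map out of `S ⊗ k[x]` may be checked on monomials. -/
lemma map_mem_of_single {M : Type} [AddCommGroup M] [Module k M] {S : Submodule k U}
    {T : Submodule k M} (L : (ℕ →₀ U) →ₗ[k] M)
    (h : ∀ n, ∀ u ∈ S, L (single n u) ∈ T) {f : ℕ →₀ U} (hf : f ∈ polySub S) : L f ∈ T := by
  rw [← Finsupp.sum_single f, Finsupp.sum, map_sum]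
  exact T.sum_mem fun n _ => h n _ (hf n)

lemma mulMap_mem {S T : Submodule k U} (β : U →ₗ[k] (ℕ →₀ U))
    (hβ : ∀ u ∈ S, β u ∈ polySub T) {f : ℕ →₀ U} (hf : f ∈ polySub S) :
    mulMap k U β f ∈ polySub T := by
  refine map_mem_of_single _ (fun n u hu => ?_) hf
  rw [mulMap_single]
  refine map_mem_of_single _ (fun m w hw => ?_) (hβ u hu)
  rw [shiftMap_single]
  exact single_mem_polySub hw _

lemma integralFrom_mem {S : Submodule k U} (lam : k) {f : ℕ →₀ U} (hf : f ∈ polySub S) :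
    integralFrom k U lam f ∈ polySub S := by
  refine map_mem_of_single _ (fun n u hu => ?_) hf
  simp only [integralFrom, LinearMap.sub_apply, LinearMap.comp_apply, antiderivMap_single,
    evalMap_single, Finsupp.lsingle_apply]
  exact sub_mem (single_mem_polySub (S.smul_mem _ hu) _)
    (single_mem_polySub (S.smul_mem _ (S.smul_mem _ hu)) _)

/-- The integral operator `f ↦ ∫_lam^x β · f` strictly lowers the filtration, hence is
nilpotent. -/
lemma isNilpotent_integral (W : ℤ → Submodule k U) (hmono : Monotone W)
    (hbot : ∃ a : ℤ, W a = ⊥) (htop : ∃ b : ℤ, W b = ⊤) (β : U →ₗ[k] (ℕ →₀ U))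
    (hβ : ∀ r, ∀ u ∈ W r, β u ∈ polySub (W (r - 1))) (lam : k) :
    IsNilpotent (integralFrom k U lam ∘ₗ mulMap k U β : Module.End k (ℕ →₀ U)) := by
  obtain ⟨a, ha⟩ := hbot
  obtain ⟨b, hb⟩ := htop
  set N : Module.End k (ℕ →₀ U) := integralFrom k U lam ∘ₗ mulMap k U β with hN
  have key : ∀ (m : ℕ) (f : ℕ →₀ U), (N ^ m) f ∈ polySub (W (b - m)) := by
    intro m f
    induction m with
    | zero => simp [mem_polySub, hb]
    | succ m ih =>
      rw [pow_succ', Module.End.mul_apply]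
      have := integralFrom_mem lam (mulMap_mem β (hβ _) ih)
      rwa [sub_sub, ← Nat.cast_succ] at this
  refine ⟨(b - a).toNat, LinearMap.ext fun f => Finsupp.ext fun n => ?_⟩
  have h := hmono (show b - ((b - a).toNat : ℤ) ≤ a by omega) (key (b - a).toNat f n)
  simpa [ha] using h

/-- Over any field of characteristic zero, the equation `f' + β · f = 0` has exactly one
polynomial solution with a given value at a given point. -/
theorem existsUnique_solution [CharZero k] (W : ℤ → Submodule k U) (hmono : Monotone W)
    (hbot : ∃ a : ℤ, W a = ⊥) (htop : ∃ b : ℤ, W b = ⊤) (β : U →ₗ[k] (ℕ →₀ U))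
    (hβ : ∀ r, ∀ u ∈ W r, β u ∈ polySub (W (r - 1))) (lam : k) (u : U) :
    ∃! f : ℕ →₀ U, (derivMap k U + mulMap k U β) f = 0 ∧ evalMap k U lam f = u := by
  simp only [deriv_eq_iff_integral_eq]
  have hunit := (isNilpotent_integral W hmono hbot htop β hβ lam).isUnit_one_add
  exact ((Module.End.isUnit_iff _).mp hunit).existsUnique _

end General

/-- The complexified `β` strictly lowers the complexified filtration. -/
lemma betaC_mem (β : V →ₗ[ℝ] (ℕ →₀ V)) {S T : Submodule ℝ V}
    (hβ : ∀ v ∈ S, β v ∈ polySub T) {u : ℂ ⊗[ℝ] V} (hu : u ∈ S.baseChange ℂ) :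
    betaC β u ∈ polySub (T.baseChange ℂ) := by
  rw [Submodule.baseChange_eq_span] at hu
  induction hu using Submodule.span_induction with
  | mem x hx =>
    obtain ⟨v, hv, rfl⟩ := hx
    intro n
    simpa [betaC, iotaP, toC] using Submodule.tmul_mem_baseChange_of_mem (1 : ℂ) (hβ v hv n)
  | zero => simp
  | add x y _ _ hx hy => rw [map_add]; exact add_mem hx hy
  | smul c x _ hx => rw [map_smul]; exact Submodule.smul_mem _ c hx

theorem evaluation_iso_of_ker_twistedDC
    [FiniteDimensional ℝ V]
    (W : ℤ → Submodule ℝ V) (hmono : Monotone W)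
    (hbot : ∃ a : ℤ, W a = ⊥) (htop : ∃ b : ℤ, W b = ⊤)
    (β : V →ₗ[ℝ] (ℕ →₀ V))
    (hβ : ∀ (r : ℤ) (v : V), v ∈ W r → ∀ n : ℕ, β v n ∈ W (r - 1)) :
    (∀ lam : ℂ,
      Function.Bijective ((evMap lam) ∘ₗ (LinearMap.ker (twistedDC β)).subtype)) ∧
    (∀ v : V, ∃! f : ℕ →₀ V, twistedD β f = 0 ∧ f 0 = v) := by
  constructor
  · intro lam
    have hmonoC : Monotone fun r => (W r).baseChange ℂ := fun r s hrs =>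
      Submodule.baseChange_mono ℂ (hmono hrs)
    have hsol := existsUnique_solution (fun r => (W r).baseChange ℂ) hmonoC
      (hbot.imp fun a ha => by simp [ha]) (htop.imp fun b hb => by simp [hb])
      (betaC β) (fun r u hu => betaC_mem β (hβ r) hu) lam
    refine Function.bijective_iff_existsUnique _ |>.mpr fun u => ?_
    obtain ⟨f, ⟨hf, hfu⟩, huniq⟩ := hsol u
    exact ⟨⟨f, hf⟩, hfu, fun g hg => Subtype.ext (huniq g ⟨g.2, hg⟩)⟩
  · intro v
    have hev : ∀ f : ℕ →₀ V, evalMap ℝ V 0 f = f 0 := by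
      intro f
      have h : evalMap ℝ V 0 = Finsupp.lapply 0 := by
        refine Finsupp.lhom_ext fun n u => ?_
        rcases n with _ | n <;> simp [evalMap_single]
      exact LinearMap.congr_fun h f
    have hsol := existsUnique_solution W hmono hbot htop β hβ 0 v
    simp only [hev] at hsol
    exact hsol

end
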